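/- Define the Laplace transforms L_W^±(a,λ) = ∫₀^∞ e^{-λt} W(a, ±t) dt for Re(λ) > 0. Then (as functions of λ, extended analytically) they satisfy the ODE ∂²L/∂λ² = 4(a - λ²)L ± 4W'(a,0) + 4λW(a,0), and consequently each L_W^±(a,·) extends to an entire function of λ. -/

import Mathlib

open Filter Asymptotics

/-- coefficients of the power series solution -/
noncomputable def csol (α β p q r b0 b1 : ℂ) : ℕ → ℂ
  | 0 => α
  | 1 => β
  | 2 => (p * α + b0) / 2
  | 3 => (p * β + q * α + b1) / 6
  | n + 4 => (p * csol α β p q r b0 b1 (n + 2) + q * csol α β p q r b0 b1 (n + 1)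
      + r * csol α β p q r b0 b1 n) / (((n : ℂ) + 4) * ((n : ℂ) + 3))

/-- rapid decay -/
def EntC (c : ℕ → ℂ) : Prop := ∀ R : ℝ, 0 < R → ∃ K : ℝ, ∀ n, ‖c n‖ * R ^ n ≤ K

/-- derived sequence -/
def dS (c : ℕ → ℂ) : ℕ → ℂ := fun n => ((n : ℂ) + 1) * c (n + 1)

/-- sum of the power series -/
noncomputable def eS (c : ℕ → ℂ) (z : ℂ) : ℂ := ∑' n, c n * z ^ n

lemma entC_csol (α β p q r b0 b1 : ℂ) : EntC (csol α β p q r b0 b1) := by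
  intro R hR
  set c := csol α β p q r b0 b1 with hc
  set S := ‖p‖ * R ^ 2 + ‖q‖ * R ^ 3 + ‖r‖ * R ^ 4 with hS
  obtain ⟨N, hN⟩ := exists_nat_ge S
  have hS0 : 0 ≤ S := by positivity
  refine ⟨∑ i ∈ Finset.range (N + 4), ‖c i‖ * R ^ i, fun n => ?_⟩
  set K := ∑ i ∈ Finset.range (N + 4), ‖c i‖ * R ^ i with hK
  have hK0 : 0 ≤ K := Finset.sum_nonneg (fun i _ => by positivity)
  induction n using Nat.strong_induction_on with
  | _ n ih =>
    by_cases hn : n < N + 4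
    · exact Finset.single_le_sum (f := fun i => ‖c i‖ * R ^ i) (fun i _ => by positivity)
        (Finset.mem_range.2 hn)
    · obtain ⟨m, rfl⟩ : ∃ m, n = m + 4 := ⟨n - 4, by omega⟩
      have h0 := ih m (by omega)
      have h1 := ih (m + 1) (by omega)
      have h2 := ih (m + 2) (by omega)
      have hm : (N : ℝ) ≤ m := by exact_mod_cast (by omega : N ≤ m)
      have e : c (m + 4) = (p * c (m + 2) + q * c (m + 1) + r * c m) /
          (((m : ℂ) + 4) * ((m : ℂ) + 3)) := by rw [hc, csol]
      have en : ‖((m : ℂ) + 4) * ((m : ℂ) + 3)‖ = ((m : ℝ) + 4) * ((m : ℝ) + 3) := by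
        have : ((m : ℂ) + 4) * ((m : ℂ) + 3) = (((m + 4) * (m + 3) : ℕ) : ℂ) := by push_cast; ring
        rw [this, Complex.norm_natCast]; push_cast; ring
      have hd : 0 < ((m : ℝ) + 4) * ((m : ℝ) + 3) := by positivity
      rw [e, norm_div, en, div_mul_eq_mul_div, div_le_iff₀ hd]
      have t1 : ‖p * c (m + 2) + q * c (m + 1) + r * c m‖ ≤
          ‖p‖ * ‖c (m + 2)‖ + ‖q‖ * ‖c (m + 1)‖ + ‖r‖ * ‖c m‖ := by
        refine (norm_add₃_le).trans ?_
        simp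
      calc _ ≤ (‖p‖ * ‖c (m + 2)‖ + ‖q‖ * ‖c (m + 1)‖ + ‖r‖ * ‖c m‖) * R ^ (m + 4) := by gcongr
        _ = ‖p‖ * R ^ 2 * (‖c (m + 2)‖ * R ^ (m + 2)) + ‖q‖ * R ^ 3 * (‖c (m + 1)‖ * R ^ (m + 1))
            + ‖r‖ * R ^ 4 * (‖c m‖ * R ^ m) := by ring
        _ ≤ ‖p‖ * R ^ 2 * K + ‖q‖ * R ^ 3 * K + ‖r‖ * R ^ 4 * K := by gcongr
        _ = K * S := by rw [hS]; ring
        _ ≤ K * (((m : ℝ) + 4) * ((m : ℝ) + 3)) := by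
          gcongr
          nlinarith [Nat.cast_nonneg (α := ℝ) m]

lemma entC_dS {c : ℕ → ℂ} (h : EntC c) : EntC (dS c) := by
  intro R hR
  obtain ⟨K, hK⟩ := h (2 * R) (by positivity)
  refine ⟨K / R, fun n => ?_⟩
  have := hK (n + 1)
  rw [le_div_iff₀ hR]
  refine le_trans ?_ this
  have e : ‖dS c n‖ = ((n : ℝ) + 1) * ‖c (n + 1)‖ := by
    rw [dS, norm_mul]
    congr 1
    rw [show (n : ℂ) + 1 = ((n + 1 : ℕ) : ℂ) by push_cast; ring, Complex.norm_natCast]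
    push_cast; ring
  have h2 : (n : ℝ) + 1 ≤ 2 ^ (n + 1) := by
    exact_mod_cast (Nat.lt_two_pow_self (n := n + 1)).le
  rw [e]
  calc _ = ((n : ℝ) + 1) * (‖c (n + 1)‖ * R ^ (n + 1)) := by ring
    _ ≤ 2 ^ (n + 1) * (‖c (n + 1)‖ * R ^ (n + 1)) := by gcongr
    _ = _ := by rw [mul_pow]; ring

lemma EntC.summable {c : ℕ → ℂ} (h : EntC c) {R : ℝ} (hR : 0 < R) :
    Summable (fun n => ‖c n‖ * R ^ n) := by
  obtain ⟨K, hK⟩ := h (2 * R) (by positivity)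
  refine Summable.of_nonneg_of_le (fun n => by positivity) (fun n => ?_)
    ((summable_geometric_of_lt_one (r := 1/2) (by norm_num) (by norm_num)).mul_left K)
  have := hK n
  calc ‖c n‖ * R ^ n = (‖c n‖ * (2 * R) ^ n) * (1/2) ^ n := by
        rw [mul_assoc, ← mul_pow]; congr 2; ring
    _ ≤ _ := by gcongr

lemma EntC.hasSum {c : ℕ → ℂ} (h : EntC c) (z : ℂ) : HasSum (fun n => c n * z ^ n) (eS c z) := by
  refine Summable.hasSum (Summable.of_norm_bounded (h.summable (R := ‖z‖ + 1) (by positivity))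
    (fun n => ?_))
  rw [norm_mul, norm_pow]
  gcongr
  linarith

lemma EntC.hasDerivAt {c : ℕ → ℂ} (h : EntC c) (z : ℂ) : HasDerivAt (eS c) (eS (dS c) z) z := by
  have hz : z ∈ Metric.ball (0 : ℂ) (‖z‖ + 1) := by simp
  have hb : ∀ (i : ℕ) (w : ℂ), w ∈ Metric.ball (0 : ℂ) (‖z‖ + 1) →
      ‖c i * w ^ i‖ ≤ ‖c i‖ * (‖z‖ + 1) ^ i := by
    intro i w hw
    rw [norm_mul, norm_pow]
    gcongr
    exact (mem_ball_zero_iff.1 hw).le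
  have hd : ∀ i : ℕ, DifferentiableOn ℂ (fun w => c i * w ^ i) (Metric.ball (0 : ℂ) (‖z‖ + 1)) := by
    intro i; fun_prop
  have hs := h.summable (R := ‖z‖ + 1) (by positivity)
  have h1 := Complex.differentiableOn_tsum_of_summable_norm hs hd Metric.isOpen_ball hb
  have h2 := Complex.hasSum_deriv_of_summable_norm hs hd Metric.isOpen_ball hb hz
  have h3 := (h1.differentiableAt (Metric.isOpen_ball.mem_nhds hz)).hasDerivAt
  have h4 : deriv (fun w => ∑' i, c i * w ^ i) z = eS (dS c) z := by
    refine h2.unique ?_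
    have h5 := (entC_dS h).hasSum z
    rw [← hasSum_nat_add_iff' 1]
    simp only [Finset.range_one, Finset.sum_singleton]
    convert h5 using 1
    · rfl
    · funext n
      simp [dS]
      ring
    · simp
  rw [h4] at h3
  exact h3

/-- entire solution -/
lemma exists_entire (α β p q r b0 b1 : ℂ) : ∃ f f1 : ℂ → ℂ, (∀ z, HasDerivAt f (f1 z) z) ∧
    (∀ z, HasDerivAt f1 ((p + q * z + r * z ^ 2) * f z + b0 + b1 * z) z) ∧ f 0 = α ∧ f1 0 = β := by
  set c := csol α β p q r b0 b1 with hc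
  have h := entC_csol α β p q r b0 b1
  rw [← hc] at h
  have z0 : ∀ d : ℕ → ℂ, eS d 0 = d 0 := by
    intro d
    unfold eS
    rw [tsum_eq_single 0]
    · simp
    · intro n hn; simp [hn]
  refine ⟨eS c, eS (dS c), h.hasDerivAt, fun z => ?_, ?_, ?_⟩
  · convert (entC_dS h).hasDerivAt z using 1
    have s := (entC_dS (entC_dS h)).hasSum z
    have s0 := h.hasSum z
    refine HasSum.unique ?_ s
    rw [← hasSum_nat_add_iff' 2]
    have a2 := (hasSum_nat_add_iff' 2).2 s0
    have a1 := (hasSum_nat_add_iff' 1).2 s0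
    have := ((a2.mul_left p).add (a1.mul_left (q * z))).add (s0.mul_left (r * z ^ 2))
    convert this using 1
    · rfl
    · funext n
      have e : c (n + 4) = (p * c (n + 2) + q * c (n + 1) + r * c n) /
          (((n : ℂ) + 4) * ((n : ℂ) + 3)) := by rw [hc, csol]
      have d3 : (n : ℂ) + 3 ≠ 0 := by exact_mod_cast (by omega : n + 3 ≠ 0)
      have d4 : (n : ℂ) + 4 ≠ 0 := by exact_mod_cast (by omega : n + 4 ≠ 0)
      simp only [dS]
      rw [show n + 2 + 1 + 1 = n + 4 by ring, e]
      push_cast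
      field_simp
      ring
    · simp only [Finset.sum_range_succ, Finset.sum_range_zero, dS]
      simp [hc, csol]
      ring
  · rw [z0, hc, csol]
  · rw [z0, dS, hc]; simp [csol]

lemma ode_zero (Q : ℂ → ℂ) (hQ : Continuous Q) (h h1 : ℂ → ℂ)
    (d0 : ∀ z : ℂ, 0 < z.re → HasDerivAt h (h1 z) z)
    (d1 : ∀ z : ℂ, 0 < z.re → HasDerivAt h1 (Q z * h z) z)
    (i0 : h 1 = 0) (i1 : h1 1 = 0) (l : ℂ) (hl : 0 < l.re) : h l = 0 := by
  set γ : ℝ → ℂ := fun t => 1 + t * (l - 1) with hγ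
  have hγc : Continuous γ := by fun_prop
  have hγd : ∀ t, HasDerivAt γ (l - 1) t := by
    intro t
    have := ((Complex.ofRealCLM.hasDerivAt (x := t)).mul_const (l - 1)).const_add (1 : ℂ)
    rw [Complex.ofRealCLM_apply, Complex.ofReal_one, one_mul] at this
    exact this
  have hre : ∀ t ∈ Set.Icc (0 : ℝ) 1, 0 < (γ t).re := by
    intro t ht
    have : (γ t).re = (1 - t) + t * l.re := by simp [hγ]; ring
    rw [this]
    rcases eq_or_lt_of_le ht.1 with h0 | h0
    · rw [← h0]; simp
    · have := mul_pos h0 hl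
      linarith [ht.2]
  obtain ⟨C, hC⟩ := (isCompact_Icc (a := (0 : ℝ)) (b := 1)).exists_bound_of_continuousOn
    (hQ.comp hγc).continuousOn
  have hd : ∀ t ∈ Set.Icc (0 : ℝ) 1, HasDerivAt (fun t => (h (γ t), h1 (γ t)))
      ((l - 1) * h1 (γ t), (l - 1) * (Q (γ t) * h (γ t))) t := by
    intro t ht
    refine HasDerivAt.prodMk ?_ ?_
    · rw [mul_comm]
      exact (d0 _ (hre t ht)).comp t (hγd t)
    · rw [mul_comm]
      exact (d1 _ (hre t ht)).comp t (hγd t)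
  have := eq_zero_of_abs_deriv_le_mul_abs_self_of_eq_zero_right
    (f := fun t => (h (γ t), h1 (γ t))) (f' := fun t => ((l - 1) * h1 (γ t), (l - 1) * (Q (γ t) * h (γ t))))
    (K := ‖l - 1‖ * max 1 C) (a := 0) (b := 1)
    (fun t ht => (hd t ht).continuousAt.continuousWithinAt)
    (fun t ht => (hd t ⟨ht.1, ht.2.le⟩).hasDerivWithinAt)
    (by simp [hγ, i0, i1]) ?_ 1 (by simp)
  · have := congrArg Prod.fst this
    simpa [hγ] using this
  · intro t ht
    have hc : ‖Q (γ t)‖ ≤ C := hC t ⟨ht.1, ht.2.le⟩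
    have n1 : ‖h (γ t)‖ ≤ ‖(h (γ t), h1 (γ t))‖ := norm_fst_le (h (γ t), h1 (γ t))
    have n2 : ‖h1 (γ t)‖ ≤ ‖(h (γ t), h1 (γ t))‖ := norm_snd_le (h (γ t), h1 (γ t))
    rw [Prod.norm_def]
    refine max_le ?_ ?_
    · simp only [norm_mul]
      rw [mul_assoc]
      gcongr
      refine n2.trans ?_
      exact le_mul_of_one_le_left (norm_nonneg _) (le_max_left _ _)
    · simp only [norm_mul]
      rw [mul_assoc]
      gcongr
      exact hc.trans (le_max_right _ _)

lemma int_pow_exp (k : ℕ) {b : ℝ} (hb : 0 < b) :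
    MeasureTheory.IntegrableOn (fun t : ℝ => t ^ k * Real.exp (-b * t)) (Set.Ioi 0) := by
  have := integrableOn_rpow_mul_exp_neg_mul_rpow (p := 1) (s := k) (b := b)
    (by linarith [Nat.cast_nonneg (α := ℝ) k]) one_pos hb
  simpa using this

lemma norm_cexp (l : ℂ) (t : ℝ) : ‖Complex.exp (-l * t)‖ = Real.exp (-l.re * t) := by
  rw [Complex.norm_exp]; simp

lemma lap_int (v : ℝ → ℂ) (hv : Continuous v) (M : ℝ) (k : ℕ)
    (hb : ∀ t : ℝ, 0 < t → ‖v t‖ ≤ M * t ^ k) (l : ℂ) (hl : 0 < l.re) :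
    MeasureTheory.IntegrableOn (fun t : ℝ => Complex.exp (-l * t) * v t) (Set.Ioi 0) := by
  refine MeasureTheory.Integrable.mono' ((int_pow_exp k hl).const_mul M)
    (Continuous.aestronglyMeasurable (by fun_prop)) ?_
  filter_upwards [MeasureTheory.ae_restrict_mem measurableSet_Ioi] with t ht
  rw [norm_mul, norm_cexp]
  have := hb t ht
  have e := Real.exp_pos (-l.re * t)
  nlinarith

lemma lap_deriv (v : ℝ → ℂ) (hv : Continuous v) (M : ℝ) (k : ℕ)
    (hb : ∀ t : ℝ, 0 < t → ‖v t‖ ≤ M * t ^ k) (l : ℂ) (hl : 0 < l.re) :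
    HasDerivAt (fun l : ℂ => ∫ t in Set.Ioi (0 : ℝ), Complex.exp (-l * t) * v t)
      (∫ t in Set.Ioi (0 : ℝ), Complex.exp (-l * t) * (-t * v t)) l := by
  have hl2 : 0 < l.re / 2 := by positivity
  refine (hasDerivAt_integral_of_dominated_loc_of_deriv_le (Metric.ball_mem_nhds l hl2)
    (F := fun (l : ℂ) (t : ℝ) => Complex.exp (-l * t) * v t)
    (F' := fun (l : ℂ) (t : ℝ) => Complex.exp (-l * t) * (-t * v t))
    (bound := fun t => M * (t ^ (k + 1) * Real.exp (-(l.re / 2) * t)))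
    (Eventually.of_forall fun z => Continuous.aestronglyMeasurable (by fun_prop))
    (lap_int v hv M k hb l hl) (Continuous.aestronglyMeasurable (by fun_prop)) ?_
    ((int_pow_exp (k + 1) hl2).const_mul M) ?_).2
  · filter_upwards [MeasureTheory.ae_restrict_mem measurableSet_Ioi] with t ht z hz
    have ht : 0 < t := ht
    have h1 : l.re / 2 ≤ z.re := by
      have := (Complex.abs_re_le_norm (z - l)).trans_lt (mem_ball_iff_norm.1 hz)
      rw [Complex.sub_re, abs_lt] at this
      linarith [this.1]
    have h2 : Real.exp (-z.re * t) ≤ Real.exp (-(l.re / 2) * t) := by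
      apply Real.exp_le_exp.2; nlinarith
    have h3 := hb t ht
    simp only [norm_mul, norm_neg, norm_cexp, Complex.norm_real, Real.norm_eq_abs, abs_of_pos ht]
    calc _ ≤ Real.exp (-(l.re / 2) * t) * (t * (M * t ^ k)) := by gcongr
      _ = _ := by ring
  · filter_upwards with t z hz
    have := (((hasDerivAt_id z).neg.mul_const (t : ℂ)).cexp).mul_const (v t)
    refine this.congr_deriv ?_
    simp only [id, Pi.neg_apply]
    ring

lemma lap_parts (a : ℝ) (u u1 : ℝ → ℂ) (d0 : ∀ t, HasDerivAt u (u1 t) t)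
    (d1 : ∀ t : ℝ, HasDerivAt u1 (((a : ℂ) - (t : ℂ) ^ 2 / 4) * u t) t) (M : ℝ) (hM : ∀ t, ‖u t‖ ≤ M)
    (l : ℂ) (hl : 0 < l.re) :
    (∫ t in Set.Ioi (0 : ℝ), Complex.exp (-l * t) * (-t * (-t * u t))) =
      4 * ((a : ℂ) - l ^ 2) * (∫ t in Set.Ioi (0 : ℝ), Complex.exp (-l * t) * u t)
        + 4 * u1 0 + 4 * l * u 0 := by
  have hu : Continuous u := continuous_iff_continuousAt.2 fun t => (d0 t).continuousAt
  have hM0 : 0 ≤ M := (norm_nonneg _).trans (hM 0)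
  have I0 := lap_int u hu M 0 (by simpa using fun t _ => hM t) l hl
  have I2 := lap_int (fun t => -t * (-t * u t)) (by fun_prop) M 2 (by
    intro t ht
    simp only [norm_mul, norm_neg, Complex.norm_real, Real.norm_eq_abs, abs_of_pos ht]
    have := hM t
    calc t * (t * ‖u t‖) ≤ t * (t * M) := by gcongr
      _ = _ := by ring) l hl
  have hG : ∀ t : ℝ, HasDerivAt (fun t : ℝ => Complex.exp (-l * t) * (u1 t + l * u t))
      (((a : ℂ) - l ^ 2) * (Complex.exp (-l * t) * u t)
        - 1 / 4 * (Complex.exp (-l * t) * (-t * (-t * u t)))) t := by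
    intro t
    have e : HasDerivAt (fun t : ℝ => Complex.exp (-l * t)) (Complex.exp (-l * t) * (-l)) t := by
      have := ((Complex.ofRealCLM.hasDerivAt (x := t)).const_mul (-l)).cexp
      simpa using this
    refine (e.mul ((d1 t).add ((d0 t).const_mul l))).congr_deriv ?_
    simp only [Pi.add_apply]
    ring
  have hb1 : ∀ t : ℝ, 0 ≤ t → ‖u1 t‖ ≤ ‖u1 0‖ + (|a| + t ^ 2) * M * t := by
    intro t ht
    have := Convex.norm_image_sub_le_of_norm_hasDerivWithin_le (f := u1) (s := Set.Icc 0 t)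
      (C := (|a| + t ^ 2) * M) (x := 0) (y := t) (fun x _ => (d1 x).hasDerivWithinAt) (by
        intro x hx
        rw [norm_mul]
        have h1 : ‖(a : ℂ) - (x : ℂ) ^ 2 / 4‖ ≤ |a| + t ^ 2 := by
          refine (norm_sub_le _ _).trans ?_
          simp only [norm_div, norm_pow, Complex.norm_real, Real.norm_eq_abs, Complex.norm_ofNat, sq_abs]
          have := hx.1
          have := hx.2
          nlinarith
        have := hM x
        gcongr) (convex_Icc 0 t) ⟨le_rfl, ht⟩ ⟨ht, le_rfl⟩
    have h2 := norm_le_norm_add_norm_sub' (u1 t) (u1 0)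
    rw [sub_zero, Real.norm_eq_abs, abs_of_nonneg ht] at this
    linarith
  have hlim : Tendsto (fun t : ℝ => Complex.exp (-l * t) * (u1 t + l * u t)) atTop (nhds 0) := by
    have T : ∀ n : ℕ, Tendsto (fun x : ℝ => x ^ n * Real.exp (-l.re * x)) atTop (nhds 0) := by
      intro n
      simpa using tendsto_rpow_mul_exp_neg_mul_atTop_nhds_zero n l.re hl
    have T' := (((T 0).const_mul (‖u1 0‖ + ‖l‖ * M)).add ((T 1).const_mul (|a| * M))).add
      ((T 3).const_mul M)
    simp only [mul_zero, add_zero] at T'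
    refine squeeze_zero_norm' ?_ T'
    filter_upwards [eventually_ge_atTop 0] with t ht
    rw [norm_mul, norm_cexp]
    have h1 := hb1 t ht
    have h2 : ‖u1 t + l * u t‖ ≤ ‖u1 t‖ + ‖l‖ * M := by
      refine (norm_add_le _ _).trans ?_
      rw [norm_mul]
      have := hM t
      gcongr
    calc _ ≤ Real.exp (-l.re * t) * (‖u1 0‖ + (|a| + t ^ 2) * M * t + ‖l‖ * M) := by
          gcongr; linarith
      _ = _ := by ring
  have key := MeasureTheory.integral_Ioi_of_hasDerivAt_of_tendsto' (a := 0) (fun t _ => hG t)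
    ((I0.const_mul _).sub (I2.const_mul _)) hlim
  rw [MeasureTheory.integral_sub (I0.const_mul _) (I2.const_mul _),
    MeasureTheory.integral_const_mul, MeasureTheory.integral_const_mul] at key
  simp only [Complex.ofReal_zero, mul_zero, Complex.exp_zero, one_mul] at key
  linear_combination (-4) * key

/-- The Laplace transforms `L_W^±(a,λ) = ∫₀^∞ e^{-λt} W(a,±t) dt` (`Re λ > 0`)
satisfy `L'' = 4(a - λ²)L ± 4W'(a,0) + 4λ W(a,0)` and extend to entire functions. -/
theorem stmt14 (a : ℝ) (W : ℝ → ℝ)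
    (hW : ContDiff ℝ (⊤ : ℕ∞) W)
    (hWode : ∀ x, deriv (deriv W) x + (x ^ 2 / 4 - a) * W x = 0)
    (hWbound : ∃ M : ℝ, ∀ t : ℝ, |W t| ≤ M)
    (sg : ℝ) (hsg : sg = 1 ∨ sg = -1) :
    ∃ F : ℂ → ℂ, Differentiable ℂ F ∧
      (∀ l : ℂ, 0 < l.re →
        F l = ∫ t in Set.Ioi (0 : ℝ), Complex.exp (-l * t) * (W (sg * t) : ℂ)) ∧
      (∀ l : ℂ, deriv (deriv F) l =
        4 * ((a : ℂ) - l ^ 2) * F l + 4 * sg * ((deriv W 0 : ℝ) : ℂ) + 4 * l * ((W 0 : ℝ) : ℂ)) := by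
  obtain ⟨M, hM⟩ := hWbound
  have hsq : sg * sg = 1 := by rcases hsg with h | h <;> rw [h] <;> norm_num
  have hdW : Differentiable ℝ W := hW.differentiable (by simp)
  have hdW1 : Differentiable ℝ (deriv W) := by
    exact (contDiff_infty_iff_deriv.1 hW).2.differentiable (by simp)
  set u : ℝ → ℂ := fun t => (W (sg * t) : ℂ) with hu
  set u1 : ℝ → ℂ := fun t => ((sg * deriv W (sg * t) : ℝ) : ℂ) with hu1
  have hmul : ∀ t : ℝ, HasDerivAt (fun t => sg * t) sg t := by
    intro t; simpa using (hasDerivAt_id t).const_mul sg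
  have d0 : ∀ t, HasDerivAt u (u1 t) t := by
    intro t
    have := ((hdW (sg * t)).hasDerivAt.comp t (hmul t)).ofReal_comp
    refine this.congr_deriv ?_
    rw [hu1]; push_cast; ring
  have d1 : ∀ t : ℝ, HasDerivAt u1 (((a : ℂ) - (t : ℂ) ^ 2 / 4) * u t) t := by
    intro t
    have := (((hdW1 (sg * t)).hasDerivAt.comp t (hmul t)).const_mul sg).ofReal_comp
    refine this.congr_deriv ?_
    have e : deriv (deriv W) (sg * t) = (a - t ^ 2 / 4) * W (sg * t) := by
      have := hWode (sg * t)
      linear_combination this - t ^ 2 / 4 * W (sg * t) * hsq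
    rw [e, hu]
    have : sg * ((a - t ^ 2 / 4) * W (sg * t) * sg) = (a - t ^ 2 / 4) * W (sg * t) := by
      linear_combination (a - t ^ 2 / 4) * W (sg * t) * hsq
    rw [this]; push_cast; ring
  have hMu : ∀ t, ‖u t‖ ≤ M := by
    intro t; rw [hu]; simpa using hM (sg * t)
  have hcu : Continuous u := continuous_iff_continuousAt.2 fun t => (d0 t).continuousAt
  set L : ℂ → ℂ := fun l => ∫ t in Set.Ioi (0 : ℝ), Complex.exp (-l * t) * u t with hL
  set L1 : ℂ → ℂ := fun l => ∫ t in Set.Ioi (0 : ℝ), Complex.exp (-l * t) * (-t * u t) with hL1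
  have D0 : ∀ l : ℂ, 0 < l.re → HasDerivAt L (L1 l) l := fun l hl =>
    lap_deriv u hcu M 0 (by simpa using fun t _ => hMu t) l hl
  have D1 : ∀ l : ℂ, 0 < l.re →
      HasDerivAt L1 (4 * ((a : ℂ) - l ^ 2) * L l + 4 * u1 0 + 4 * l * u 0) l := by
    intro l hl
    have := lap_deriv (fun t => -t * u t) (by fun_prop) M 1 (by
      intro t ht
      simp only [norm_mul, norm_neg, Complex.norm_real, Real.norm_eq_abs, abs_of_pos ht]
      have := hMu t
      calc t * ‖u t‖ ≤ t * M := by gcongr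
        _ = _ := by ring) l hl
    rw [lap_parts a u u1 d0 d1 M hMu l hl] at this
    exact this
  obtain ⟨f, f1, e0, e1, i0, i1⟩ := exists_entire (L 1) (L1 1) (4 * (a - 1)) (-8) (-4)
    (4 * u1 0 + 4 * u 0) (4 * u 0)
  have g0 : ∀ z : ℂ, HasDerivAt (fun z => f (z - 1)) (f1 (z - 1)) z := fun z =>
    (e0 (z - 1)).comp_sub_const z 1
  have g1 : ∀ z : ℂ, HasDerivAt (fun z => f1 (z - 1))
      (4 * ((a : ℂ) - z ^ 2) * f (z - 1) + 4 * u1 0 + 4 * z * u 0) z := fun z =>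
    ((e1 (z - 1)).comp_sub_const z 1).congr_deriv (by ring)
  refine ⟨fun z => f (z - 1), fun z => (g0 z).differentiableAt, ?_, ?_⟩
  · intro l hl
    have := ode_zero (fun z => 4 * ((a : ℂ) - z ^ 2)) (by fun_prop)
      (fun z => f (z - 1) - L z) (fun z => f1 (z - 1) - L1 z)
      (fun z hz => (g0 z).sub (D0 z hz))
      (fun z hz => ((g1 z).sub (D1 z hz)).congr_deriv (by ring))
      (by simp [i0]) (by simp [i1]) l hl
    exact sub_eq_zero.1 this
  · intro l
    have h1 : deriv (fun z => f (z - 1)) = fun z => f1 (z - 1) := funext fun z => (g0 z).deriv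
    rw [h1, (g1 l).deriv]
    simp only [hu, hu1, mul_zero]
    push_cast
    ring
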